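/- arXiv:cs/0010032 — 3 statements merged into one kernel-verified Lean document; each statement's English description precedes it below -/
import Mathlib

section
/- Let T ⊆ L_not be a theory and F a formula of L_not with T ⊨_min ¬F. Then T and T ∪ {not F} have exactly the same static expansions. -/
/-!
Everything that `CnNot` adds to a theory `T` (the axioms, the instances of the invariance rule, the
default atoms `not F`) is, up to propositional consequence, a formula whose truth depends only on
the default atoms. Hence, for a set `A` of such formulas, a model of `T` that agrees on default
atoms with a model of `CnNot (T ∪ A)` is itself a model of `CnNot (T ∪ A)`
(`satTheory_cnNot_of_dflt_eq`). Since `Smaller` compares only interpretations that agree on default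
atoms, minimal models of `CnNot (T ∪ A)` are minimal models of `T`, and minimal entailment passes
from `T` to `CnNot (T ∪ A)` (`MinEntails.cnNot`).

So if `T ⊨_min ¬F`, then `Td ⊨_min ¬F` for any static expansion `Td` of `T` or of `T ∪ {not F}`.
In both cases `not F` is already among the default atoms in the fixed-point equation for `Td`, so
the two equations coincide.
-/

/-- Formulas of the modal language `L_not` over the set `At` of objective atoms.
`not F` is the default negation atom for a formula `F` (arbitrary nesting allowed). -/
inductive Fml (At : Type) : Type
  | atom : At → Fml At
  | tru : Fml At
  | fls : Fml At
  | neg : Fml At → Fml At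
  | conj : Fml At → Fml At → Fml At
  | disj : Fml At → Fml At → Fml At
  | impl : Fml At → Fml At → Fml At
  | equiv : Fml At → Fml At → Fml At
  | not : Fml At → Fml At

/-- An interpretation of `L_not`: a truth value for every objective atom and for
every default atom `not F` (the latter treated as new propositional atoms). -/
structure Interp (At : Type) where
  obj : At → Prop
  dflt : Fml At → Prop

/-- Classical satisfaction of a formula by an interpretation. -/
def Interp.sat {At : Type} (I : Interp At) : Fml At → Prop
  | Fml.atom a => I.obj a
  | Fml.tru => True
  | Fml.fls => False
  | Fml.neg F => ¬ Interp.sat I F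
  | Fml.conj F G => Interp.sat I F ∧ Interp.sat I G
  | Fml.disj F G => Interp.sat I F ∨ Interp.sat I G
  | Fml.impl F G => Interp.sat I F → Interp.sat I G
  | Fml.equiv F G => (Interp.sat I F ↔ Interp.sat I G)
  | Fml.not F => I.dflt F

/-- `I` is a model of the theory `T`. -/
def Interp.satTheory {At : Type} (I : Interp At) (T : Set (Fml At)) : Prop :=
  ∀ F ∈ T, I.sat F

/-- A set `S` contains `T`, the axioms (CA) and (DA), and is closed under
classical propositional consequence and the invariance rule (IR). -/
def CnClosed {At : Type} (T S : Set (Fml At)) : Prop :=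
  T ⊆ S ∧
  Fml.not Fml.fls ∈ S ∧
  Fml.neg (Fml.not Fml.tru) ∈ S ∧
  (∀ F G : Fml At,
    Fml.equiv (Fml.not (Fml.disj F G)) (Fml.conj (Fml.not F) (Fml.not G)) ∈ S) ∧
  (∀ F : Fml At, (∀ I : Interp At, I.satTheory S → I.sat F) → F ∈ S) ∧
  (∀ F G : Fml At, Fml.equiv F G ∈ S → Fml.equiv (Fml.not F) (Fml.not G) ∈ S)

/-- `Cn_not(T)`: the smallest set of formulas containing `T`, the axioms (CA), (DA),
closed under propositional consequence and the invariance rule (IR). -/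
def CnNot {At : Type} (T : Set (Fml At)) : Set (Fml At) :=
  ⋂₀ {S | CnClosed T S}

/-- `M` is smaller than `N`: they agree on all default atoms and the objective atoms
true in `M` form a proper subset of those true in `N`. -/
def Smaller {At : Type} (M N : Interp At) : Prop :=
  M.dflt = N.dflt ∧ {a | M.obj a} ⊂ {a | N.obj a}

/-- `M` is a minimal model of `T`. -/
def IsMinModel {At : Type} (T : Set (Fml At)) (M : Interp At) : Prop :=
  M.satTheory T ∧ ∀ N : Interp At, N.satTheory T → ¬ Smaller N M

/-- `T ⊨_min F`: `F` is true in all minimal models of `T`. -/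
def MinEntails {At : Type} (T : Set (Fml At)) (F : Fml At) : Prop :=
  ∀ M : Interp At, IsMinModel T M → M.sat F

/-- `Td` is a static expansion of `T`. -/
def IsStaticExpansion {At : Type} (T Td : Set (Fml At)) : Prop :=
  Td = CnNot (T ∪ {G | ∃ F : Fml At, MinEntails Td (Fml.neg F) ∧ G = Fml.not F})

/-- `Tbar` is the least static expansion of `T`. -/
def IsLeastStaticExpansion {At : Type} (T Tbar : Set (Fml At)) : Prop :=
  IsStaticExpansion T Tbar ∧ ∀ Td : Set (Fml At), IsStaticExpansion T Td → Tbar ⊆ Td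

/-- The truth value of `G` depends only on the truth values of the default atoms. -/
def DefaultOnly {At : Type} (G : Fml At) : Prop :=
  ∀ I J : Interp At, I.dflt = J.dflt → I.sat G → J.sat G

theorem cnClosed_cnNot {At : Type} (T : Set (Fml At)) : CnClosed T (CnNot T) := by
  refine ⟨fun G hG S hS => hS.1 hG, fun S hS => hS.2.1, fun S hS => hS.2.2.1,
    fun G H S hS => hS.2.2.2.1 G H, fun G hG S hS => ?_, fun G H h S hS => ?_⟩
  · exact hS.2.2.2.2.1 G fun I hI => hG I fun K hK => hI K (hK S hS)
  · exact hS.2.2.2.2.2 G H (h S hS)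

/-- The reason: `CnNot (T ∪ A)` is axiomatized by the union `B` of `T` and the members of
`CnNot (T ∪ A)` that are `DefaultOnly`, since the set of propositional consequences of `B` is
already closed in the sense of `CnClosed`. -/
theorem satTheory_cnNot_of_dflt_eq {At : Type} {T A : Set (Fml At)}
    (hA : ∀ G ∈ A, DefaultOnly G) {I J : Interp At} (hI : I.satTheory (CnNot (T ∪ A)))
    (hJ : J.satTheory T) (hd : I.dflt = J.dflt) : J.satTheory (CnNot (T ∪ A)) := by
  obtain ⟨hsub, hfls, htru, hdisj, hcons, hinv⟩ := cnClosed_cnNot (T ∪ A)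
  let B : Set (Fml At) := T ∪ {G | G ∈ CnNot (T ∪ A) ∧ DefaultOnly G}
  have hB : B ⊆ CnNot (T ∪ A) := by
    rintro G (hG | hG)
    · exact hsub (Or.inl hG)
    · exact hG.1
  let S : Set (Fml At) := {G | ∀ K : Interp At, K.satTheory B → K.sat G}
  have hBS : B ⊆ S := fun G hG K hK => hK G hG
  have hS : CnClosed (T ∪ A) S := by
    refine ⟨?_, ?_, ?_, fun G H => ?_, fun G hG K hK => ?_, fun G H hGH => ?_⟩
    · rintro G (hG | hG)
      · exact hBS (Or.inl hG)
      · exact hBS (Or.inr ⟨hsub (Or.inr hG), hA G hG⟩)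
    · refine hBS (Or.inr ⟨hfls, fun K L h => ?_⟩)
      simp only [Interp.sat, h, imp_self]
    · refine hBS (Or.inr ⟨htru, fun K L h => ?_⟩)
      simp only [Interp.sat, h, imp_self]
    · refine hBS (Or.inr ⟨hdisj G H, fun K L h => ?_⟩)
      simp only [Interp.sat, h, imp_self]
    · exact hG K fun H hH => hH K hK
    · -- The premise lies in `CnNot (T ∪ A)`, so the rule may be applied there.
      have hmem : Fml.equiv G H ∈ CnNot (T ∪ A) :=
        hcons _ fun K hK => hGH K fun L hL => hK L (hB hL)
      refine hBS (Or.inr ⟨hinv G H hmem, fun K L h => ?_⟩)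
      simp only [Interp.sat, h, imp_self]
  intro G hG
  refine hG S hS J ?_
  rintro H (hH | hH)
  · exact hJ H hH
  · exact hH.2 I J hd (hI H hH.1)

theorem MinEntails.cnNot {At : Type} {T A : Set (Fml At)} {G : Fml At} (h : MinEntails T G)
    (hA : ∀ H ∈ A, DefaultOnly H) : MinEntails (CnNot (T ∪ A)) G := by
  rintro M ⟨hM, hmin⟩
  refine h M ⟨fun H hH => hM H ((cnClosed_cnNot (T ∪ A)).1 (Or.inl hH)), fun N hN hlt => ?_⟩
  exact hmin N (satTheory_cnNot_of_dflt_eq hA hM hN hlt.1.symm) hlt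

theorem defaultOnly_not {At : Type} (G : Fml At) : DefaultOnly (Fml.not G) := by
  intro I J h
  simp only [Interp.sat, h, imp_self]

/-- Let `T` be a theory and `F` a formula with `T ⊨_min ¬F`.  Then `T` and
`T ∪ {not F}` have exactly the same static expansions. -/
theorem staticExpansion_add_not {At : Type} (T : Set (Fml At)) (F : Fml At)
    (h : MinEntails T (Fml.neg F)) (Td : Set (Fml At)) :
    IsStaticExpansion T Td ↔ IsStaticExpansion (T ∪ {Fml.not F}) Td := by
  unfold IsStaticExpansion
  set N : Set (Fml At) := {G | ∃ F : Fml At, MinEntails Td (Fml.neg F) ∧ G = Fml.not F} with hN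
  have hND : ∀ G ∈ N, DefaultOnly G := by
    rintro _ ⟨G, -, rfl⟩
    exact defaultOnly_not G
  have hFD : ∀ G ∈ {Fml.not F} ∪ N, DefaultOnly G := by
    rintro G (rfl | hG)
    · exact defaultOnly_not F
    · exact hND G hG
  rw [Set.union_assoc]
  have key : MinEntails Td (Fml.neg F) → {Fml.not F} ∪ N = N := fun hF =>
    Set.union_eq_self_of_subset_left (Set.singleton_subset_iff.2 ⟨F, hF, rfl⟩)
  constructor
  · intro hTd
    have hF : MinEntails Td (Fml.neg F) := hTd ▸ h.cnNot hND
    rwa [key hF]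
  · intro hTd
    have hF : MinEntails Td (Fml.neg F) := hTd ▸ h.cnNot hFD
    rwa [key hF] at hTd
end

section
/- Let T ⊆ L_not be any theory and K = (W,R,V) a Kripke structure satisfying: (i) for every w ∈ W there is w' ∈ W with R(w,w'); (ii) (K,w) ⊨ T for every w ∈ W; (iii) whenever R(w,w'), the interpretation K(w') is a minimal model of T. Then for every w ∈ W, the interpretation K(w) satisfies every formula that belongs to all static expansions of T; in particular, if T has a least static expansion \overline{T}, then K(w) is a model of \overline{T}. -/
/-- A Kripke structure with worlds `W`, visibility relation `R` and
valuation `V` of the objective atoms at each world. -/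
structure Kripke (At W : Type) where
  R : W → W → Prop
  V : W → At → Prop

/-- Truth of a formula of `L_not` at a world of a Kripke structure:
classical for the propositional connectives, and
`not F` is true at `w` iff `F` is false at every world seen from `w`. -/
def Kripke.sat {At W : Type} (K : Kripke At W) : W → Fml At → Prop
  | w, Fml.atom a => K.V w a
  | _, Fml.tru => True
  | _, Fml.fls => False
  | w, Fml.neg F => ¬ Kripke.sat K w F
  | w, Fml.conj F G => Kripke.sat K w F ∧ Kripke.sat K w G
  | w, Fml.disj F G => Kripke.sat K w F ∨ Kripke.sat K w G
  | w, Fml.impl F G => Kripke.sat K w F → Kripke.sat K w G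
  | w, Fml.equiv F G => (Kripke.sat K w F ↔ Kripke.sat K w G)
  | w, Fml.not F => ∀ w' : W, K.R w w' → ¬ Kripke.sat K w' F

/-- The interpretation `K(w)` of `L_not` induced by the world `w`:
an objective or default atom is true in it iff it is true at `w`. -/
def Kripke.interp {At W : Type} (K : Kripke At W) (w : W) : Interp At where
  obj a := K.sat w (Fml.atom a)
  dflt F := K.sat w (Fml.not F)

theorem Kripke.interp_sat {At W : Type} (K : Kripke At W) (w : W) (F : Fml At) :
    (K.interp w).sat F ↔ K.sat w F := by
  induction F <;> simp_all [Interp.sat, Kripke.sat, Kripke.interp]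

theorem cnNot_subset {At : Type} {T S : Set (Fml At)} (h : CnClosed T S) : CnNot T ⊆ S :=
  fun _ hF => hF S h

theorem cnNot_mono {At : Type} {T T' : Set (Fml At)} (h : T ⊆ T') : CnNot T ⊆ CnNot T' :=
  cnNot_subset ⟨h.trans (cnClosed_cnNot T').1, (cnClosed_cnNot T').2⟩

/-- A formula is default-determined if its truth value depends only on the values of the default
atoms. This is the semantic counterpart of having no objective atom outside the scope of `not`. -/
def DefaultDetermined {At : Type} (F : Fml At) : Prop :=
  ∀ I J : Interp At, I.dflt = J.dflt → (I.sat F ↔ J.sat F)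

/-- `Cn_not(T ∪ D)`, for `D` a set of default atoms, follows propositionally from `T` and the
default-determined formulas it contains. -/
theorem cnNot_axiomatised {At : Type} {T D : Set (Fml At)} (hD : ∀ G ∈ D, ∃ F, G = Fml.not F)
    {I : Interp At} (hT : I.satTheory T)
    (hI : ∀ F ∈ CnNot (T ∪ D), DefaultDetermined F → I.sat F) :
    I.satTheory (CnNot (T ∪ D)) := by
  have hC := cnClosed_cnNot (T ∪ D)
  let S₀ : Set (Fml At) := {F | ∀ J : Interp At, J.satTheory T →
    (∀ G ∈ CnNot (T ∪ D), DefaultDetermined G → J.sat G) → J.sat F}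
  have hS₀ : CnClosed (T ∪ D) S₀ := by
    refine ⟨?_, ?_, ?_, ?_, ?_, ?_⟩
    · rintro F (hF | hF) J hJ hJD
      · exact hJ F hF
      · refine hJD F (hC.1 (Or.inr hF)) ?_
        obtain ⟨G, rfl⟩ := hD F hF
        intro I J h
        simp [Interp.sat, h]
    · exact fun J _ hJD => hJD _ hC.2.1 fun I J h => by simp [Interp.sat, h]
    · exact fun J _ hJD => hJD _ hC.2.2.1 fun I J h => by simp [Interp.sat, h]
    · exact fun F G J _ hJD => hJD _ (hC.2.2.2.1 F G) fun I J h => by simp [Interp.sat, h]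
    · exact fun F hF J hJ hJD => hF J fun G hG => hG J hJ hJD
    · intro F G hFG J _ hJD
      -- The premise lies in `Cn_not(T ∪ D)` itself, so the invariance rule applies there and
      -- yields a default-determined formula.
      have hmem : Fml.equiv F G ∈ CnNot (T ∪ D) :=
        hC.2.2.2.2.1 _ fun L hL =>
          hFG L (fun H hH => hL H (hC.1 (Or.inl hH))) fun H hH _ => hL H hH
      exact hJD _ (hC.2.2.2.2.2 F G hmem) fun I J h => by simp [Interp.sat, h]
  exact fun F hF => cnNot_subset hS₀ hF I hT hI

theorem satTheory_cnNot_of_dflt_eq_s7 {At : Type} {T D : Set (Fml At)}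
    (hD : ∀ G ∈ D, ∃ F, G = Fml.not F) {M N : Interp At} (hM : M.satTheory (CnNot (T ∪ D)))
    (hN : N.satTheory T) (h : N.dflt = M.dflt) : N.satTheory (CnNot (T ∪ D)) :=
  cnNot_axiomatised hD hN fun F hF hFD => (hFD N M h).2 (hM F hF)

theorem isMinModel_cnNot_iff {At : Type} {T D : Set (Fml At)}
    (hD : ∀ G ∈ D, ∃ F, G = Fml.not F) (M : Interp At) :
    IsMinModel (CnNot (T ∪ D)) M ↔ IsMinModel T M ∧ M.satTheory (CnNot (T ∪ D)) := by
  have hC := cnClosed_cnNot (T ∪ D)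
  constructor
  · rintro ⟨hM, hmin⟩
    exact ⟨⟨fun F hF => hM F (hC.1 (Or.inl hF)), fun N hN hs =>
      hmin N (satTheory_cnNot_of_dflt_eq_s7 hD hM hN hs.1) hs⟩, hM⟩
  · rintro ⟨⟨_, hmin⟩, hM⟩
    exact ⟨hM, fun N hN => hmin N fun F hF => hN F (hC.1 (Or.inl hF))⟩

/-- The default atoms `not F` such that `F` is false in all minimal models of `T` that
satisfy `S`. -/
def relDefaults {At : Type} (T S : Set (Fml At)) : Set (Fml At) :=
  {G | ∃ F : Fml At,
    (∀ M : Interp At, IsMinModel T M → M.satTheory S → M.sat (Fml.neg F)) ∧ G = Fml.not F}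

/-- The monotone variant of the operator defining static expansions: minimality is taken
relative to `T` instead of `S`. -/
def staticOp {At : Type} (T : Set (Fml At)) : Set (Fml At) →o Set (Fml At) where
  toFun S := CnNot (T ∪ relDefaults T S)
  monotone' S S' h := by
    refine cnNot_mono (Set.union_subset_union_right T ?_)
    rintro G ⟨F, hF, rfl⟩
    exact ⟨F, fun M hM hS => hF M hM fun H hH => hS H (h hH), rfl⟩

theorem isStaticExpansion_lfp {At : Type} (T : Set (Fml At)) :
    IsStaticExpansion T (staticOp T).lfp := by
  set S := (staticOp T).lfp with hS
  have hfix : CnNot (T ∪ relDefaults T S) = S := (staticOp T).map_lfp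
  have hmin : ∀ M : Interp At, IsMinModel S M ↔ IsMinModel T M ∧ M.satTheory S := by
    intro M
    have := isMinModel_cnNot_iff (T := T) (D := relDefaults T S)
      (fun G ⟨F, _, hG⟩ => ⟨F, hG⟩) M
    rwa [hfix] at this
  have hdef : {G | ∃ F : Fml At, MinEntails S (Fml.neg F) ∧ G = Fml.not F}
      = relDefaults T S := by
    simp only [MinEntails, hmin, relDefaults, and_imp]
  rw [IsStaticExpansion, hdef, hfix]

theorem lfp_staticOp_subset_theory {At W : Type} (T : Set (Fml At)) (K : Kripke At W)
    (h1 : ∀ w : W, ∃ w' : W, K.R w w')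
    (h2 : ∀ w : W, ∀ F ∈ T, K.sat w F)
    (h3 : ∀ w w' : W, K.R w w' → IsMinModel T (K.interp w')) :
    (staticOp T).lfp ⊆ {F | ∀ w, K.sat w F} := by
  refine (staticOp T).lfp_le (cnNot_subset ⟨?_, ?_, ?_, ?_, ?_, ?_⟩)
  · rintro G (hG | ⟨F, hF, rfl⟩) w
    · exact h2 w G hG
    · intro w' hw hsat
      exact hF (K.interp w') (h3 w w' hw) (fun H hH => (K.interp_sat w' H).2 (hH w'))
        ((K.interp_sat w' F).2 hsat)
  · exact fun w w' _ h => h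
  · intro w h
    obtain ⟨w', hw⟩ := h1 w
    exact h w' hw trivial
  · intro F G w
    simp only [Kripke.sat, not_or]
    exact ⟨fun h => ⟨fun v hv => (h v hv).1, fun v hv => (h v hv).2⟩,
      fun h v hv => ⟨h.1 v hv, h.2 v hv⟩⟩
  · exact fun F hF w =>
      (K.interp_sat w F).1 (hF (K.interp w) fun G hG => (K.interp_sat w G).2 (hG w))
  · intro F G h w
    exact forall₂_congr fun v _ => not_congr (h v)

/-- Under the hypotheses of the previous theorem, for every world `w`,
the interpretation `K(w)` satisfies every formula belonging to all static
expansions of `T`; in particular, if `T` has a least static expansion `Tbar`,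
then `K(w)` is a model of `Tbar`. -/
theorem kripke_model_of_least_staticExpansion {At W : Type} [Nonempty W]
    (T : Set (Fml At)) (K : Kripke At W)
    (h1 : ∀ w : W, ∃ w' : W, K.R w w')
    (h2 : ∀ w : W, ∀ F ∈ T, K.sat w F)
    (h3 : ∀ w w' : W, K.R w w' → IsMinModel T (K.interp w')) :
    (∀ w : W, ∀ F : Fml At,
        (∀ Td : Set (Fml At), IsStaticExpansion T Td → F ∈ Td) → (K.interp w).sat F) ∧
    (∀ Tbar : Set (Fml At), IsLeastStaticExpansion T Tbar →
        ∀ w : W, (K.interp w).satTheory Tbar) := by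
  have key : ∀ w : W, ∀ F : Fml At,
      (∀ Td : Set (Fml At), IsStaticExpansion T Td → F ∈ Td) → (K.interp w).sat F :=
    fun w F hF => (K.interp_sat w F).2
      (lfp_staticOp_subset_theory T K h1 h2 h3 (hF _ (isStaticExpansion_lfp T)) w)
  exact ⟨key, fun Tbar hT w F hF => key w F fun Td hTd => hT.2 Td hTd hF⟩
end

section
/- Let P be a finite super logic program with least static expansion \overline{P}, let I be a full model of \overline{P}, and let I_obj ∪ I_def be its reduct. Then I_def ∈ N_P, the fixed point of the iteration of Λ_P starting from Def. -/
/-- A clause of a super logic program: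
`A1 ∨ … ∨ Ak ← B1 ∧ … ∧ Bm ∧ not C1 ∧ … ∧ not Cn`, where the `Ai` (head) and
`Bi` (posBody) are objective atoms and the `Ci` (negBody) are finite
conjunctions of objective atoms. -/
structure Clause (At : Type) where
  head : List At
  posBody : List At
  negBody : List (List At)

/-- Valuations of the objective atoms (`Obj`). -/
abbrev ObjVal (At : Type) := At → Prop

/-- Valuations of the default atoms `not(p1 ∧ … ∧ pn)`, indexed by the list
`[p1, …, pn]` of atoms of the conjunction. -/
abbrev DefVal (At : Type) := List At → Prop

/-- `Def`: the valuations of the default atoms making `not(true)`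
(the empty conjunction case) false. -/
def DefSet (At : Type) : Set (DefVal At) := {d | ¬ d []}

/-- Satisfaction of a clause by a reduced interpretation `I_obj ∪ I_def`. -/
def satClause {At : Type} (Io : ObjVal At) (Id : DefVal At) (c : Clause At) : Prop :=
  ((∀ b ∈ c.posBody, Io b) ∧ (∀ C ∈ c.negBody, Id C)) → ∃ a ∈ c.head, Io a

/-- `I_obj ∪ I_def` is a model of the super program `P`. -/
def satProg {At : Type} (Io : ObjVal At) (Id : DefVal At) (P : Set (Clause At)) : Prop :=
  ∀ c ∈ P, satClause Io Id c

/-- `I_obj ∪ I_def` is a minimal model of `P`: it is a model and no model with the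
same default part has a strictly smaller set of true objective atoms. -/
def IsMinModelProg {At : Type} (P : Set (Clause At)) (Io : ObjVal At) (Id : DefVal At) : Prop :=
  satProg Io Id P ∧
  ∀ Io' : ObjVal At, satProg Io' Id P → ¬ ({a | Io' a} ⊂ {a | Io a})

/-- `I_def` is given by the set `O` of objective valuations:
`I_def ⊨ not(p1∧…∧pn)` iff every valuation in `O` satisfies `¬(p1∧…∧pn)`. -/
def givenBy {At : Type} (Id : DefVal At) (O : Set (ObjVal At)) : Prop :=
  ∀ E : List At, Id E ↔ ∀ Io ∈ O, ∃ p ∈ E, ¬ Io p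

/-- The operator `Φ_P`: objective parts of minimal models of `P` whose default part
belongs to `D`. -/
def PhiOp {At : Type} (P : Set (Clause At)) (D : Set (DefVal At)) : Set (ObjVal At) :=
  {Io | ∃ Id ∈ D, IsMinModelProg P Io Id}

/-- The operator `Ψ_P`: default valuations given by some nonempty subset of `O`
and extendable to a model of `P`. -/
def PsiOp {At : Type} (P : Set (Clause At)) (O : Set (ObjVal At)) : Set (DefVal At) :=
  {Id | Id ∈ DefSet At ∧
        (∃ O' ⊆ O, O'.Nonempty ∧ givenBy Id O') ∧
        (∃ Io : ObjVal At, satProg Io Id P)}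

/-- The operator `Λ_P := Ψ_P ∘ Φ_P`. -/
def LamOp {At : Type} (P : Set (Clause At)) : Set (DefVal At) → Set (DefVal At) :=
  PsiOp P ∘ PhiOp P

/-- The conjunction `p1 ∧ … ∧ pn` of a list of objective atoms
(the empty conjunction is `true`, a one-element list is just the atom). -/
def conjAtoms {At : Type} : List At → Fml At
  | [] => Fml.tru
  | [p] => Fml.atom p
  | p :: q :: ps => Fml.conj (Fml.atom p) (conjAtoms (q :: ps))

/-- Conjunction of a list of formulas. -/
def conjList {At : Type} : List (Fml At) → Fml At
  | [] => Fml.tru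
  | [F] => F
  | F :: G :: Gs => Fml.conj F (conjList (G :: Gs))

/-- Disjunction `p1 ∨ … ∨ pk` of a list of objective atoms (empty = `false`). -/
def disjAtoms {At : Type} : List At → Fml At
  | [] => Fml.fls
  | [p] => Fml.atom p
  | p :: q :: ps => Fml.disj (Fml.atom p) (disjAtoms (q :: ps))

/-- The default atom `not(p1 ∧ … ∧ pn)`, with `not(true)` (the case `n = 0`)
identified with `false`. -/
def notConj {At : Type} : List At → Fml At
  | [] => Fml.fls
  | p :: ps => Fml.not (conjAtoms (p :: ps))

/-- The formula of `L_not` corresponding to a program clause. -/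
def Clause.toFml {At : Type} (c : Clause At) : Fml At :=
  Fml.impl (conjList (c.posBody.map Fml.atom ++ c.negBody.map notConj))
    (disjAtoms c.head)

/-- The default part of the reduct of a full interpretation `I`:
its restriction to the default atoms `not(p1 ∧ … ∧ pn)`. -/
def reductDef {At : Type} (I : Interp At) : DefVal At :=
  fun E => I.dflt (conjAtoms E)

/-! ### Semantics of lists of formulas and of clauses -/

theorem sat_conjAtoms {At : Type} (I : Interp At) :
    ∀ E : List At, I.sat (conjAtoms E) ↔ ∀ p ∈ E, I.obj p
  | [] => by simp [conjAtoms, Interp.sat]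
  | [p] => by simp [conjAtoms, Interp.sat]
  | p :: q :: ps => by
    have h := sat_conjAtoms I (q :: ps)
    simp only [conjAtoms, Interp.sat, h, List.forall_mem_cons]

theorem sat_conjList {At : Type} (I : Interp At) :
    ∀ L : List (Fml At), I.sat (conjList L) ↔ ∀ F ∈ L, I.sat F
  | [] => by simp [conjList, Interp.sat]
  | [F] => by simp [conjList]
  | F :: G :: L => by
    have h := sat_conjList I (G :: L)
    simp only [conjList, Interp.sat, h, List.forall_mem_cons]

theorem sat_disjAtoms {At : Type} (I : Interp At) :
    ∀ E : List At, I.sat (disjAtoms E) ↔ ∃ p ∈ E, I.obj p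
  | [] => by simp [disjAtoms, Interp.sat]
  | [p] => by simp [disjAtoms, Interp.sat]
  | p :: q :: ps => by
    have h := sat_disjAtoms I (q :: ps)
    simp only [disjAtoms, Interp.sat, h, List.exists_mem_cons_iff]

theorem sat_notConj {At : Type} (I : Interp At) (h : ¬ I.dflt Fml.tru) :
    ∀ E : List At, I.sat (notConj E) ↔ reductDef I E
  | [] => by simpa [notConj, Interp.sat, reductDef, conjAtoms] using h
  | p :: ps => by simp [notConj, Interp.sat, reductDef]

theorem satTheory_iff_satProg {At : Type} (I : Interp At) (h : ¬ I.dflt Fml.tru)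
    (P : Set (Clause At)) :
    I.satTheory (Clause.toFml '' P) ↔ satProg I.obj (reductDef I) P := by
  simp only [Interp.satTheory, Set.forall_mem_image, satProg]
  refine forall₂_congr fun c _ => ?_
  simp only [Clause.toFml, Interp.sat, sat_conjList, sat_disjAtoms, satClause, List.mem_append,
    List.mem_map, or_imp, forall_and, forall_exists_index, and_imp, forall_apply_eq_imp_iff₂,
    sat_notConj I h]

/-- The axioms and the conclusions of the invariance rule contain default atoms only. Hence an
interpretation with the same default atoms as a model of `CnNot T` is again a model of `CnNot T`
as soon as it is a model of `T`. -/
theorem satTheory_cnNot_of_dflt_eq_s13 {At : Type} {T : Set (Fml At)} {J K : Interp At}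
    (hJ : J.satTheory (CnNot T)) (hd : K.dflt = J.dflt) (hK : K.satTheory T) :
    K.satTheory (CnNot T) := by
  obtain ⟨h1, h2, h3, h4, h5, h6⟩ := cnClosed_cnNot T
  have key : CnClosed T {F | F ∈ CnNot T ∧ K.sat F} := by
    refine ⟨fun F hF => ⟨h1 hF, hK F hF⟩, ⟨h2, ?_⟩, ⟨h3, ?_⟩, fun F G => ⟨h4 F G, ?_⟩,
      fun F hF => ⟨h5 F fun I hI => hF I fun G hG => hI G hG.1, hF K fun G hG => hG.2⟩,
      fun F G hFG => ⟨h6 F G hFG.1, ?_⟩⟩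
    · simpa [Interp.sat, hd] using hJ _ h2
    · simpa [Interp.sat, hd] using hJ _ h3
    · simpa [Interp.sat, hd] using hJ _ (h4 F G)
    · simpa [Interp.sat, hd] using hJ _ (h6 F G hFG.1)
  exact fun F hF => (hF _ key).2

section Closed

variable {At : Type} {T S : Set (Fml At)} {I : Interp At}

theorem CnClosed.dflt_congr (h : CnClosed T S) (hI : I.satTheory S) {F G : Fml At}
    (hFG : ∀ K : Interp At, K.sat F ↔ K.sat G) : I.dflt F ↔ I.dflt G :=
  hI _ (h.2.2.2.2.2 F G (h.2.2.2.2.1 _ fun K _ => hFG K))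

theorem CnClosed.dflt_disj (h : CnClosed T S) (hI : I.satTheory S) (F G : Fml At) :
    I.dflt (Fml.disj F G) ↔ I.dflt F ∧ I.dflt G :=
  hI _ (h.2.2.2.1 F G)

theorem CnClosed.not_dflt_tru (h : CnClosed T S) (hI : I.satTheory S) : ¬ I.dflt Fml.tru :=
  hI _ h.2.2.1

theorem CnClosed.exists_disj (h : CnClosed T S) (hI : I.satTheory S) (L : List (Fml At)) :
    (∀ F ∈ L, I.dflt F) →
      ∃ D, I.dflt D ∧ ∀ K : Interp At, K.sat D ↔ ∃ F ∈ L, K.sat F := by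
  induction L with
  | nil => exact fun _ => ⟨Fml.fls, hI _ h.2.1, by simp [Interp.sat]⟩
  | cons F L ih =>
    intro hL
    rw [List.forall_mem_cons] at hL
    obtain ⟨D, hD, hD'⟩ := ih hL.2
    exact ⟨Fml.disj F D, (h.dflt_disj hI F D).2 ⟨hL.1, hD⟩, fun K => by
      simp only [Interp.sat, hD', List.exists_mem_cons_iff]⟩

/-- All conjunctions of atoms whose default negation holds in `I` can be collected into one
disjunction `D` with `I ⊨ not D`. The disjunction is finite since, up to equivalence, a conjunction
depends only on its set of atoms. -/
theorem CnClosed.exists_disj_conjAtoms [Finite At] (h : CnClosed T S) (hI : I.satTheory S) :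
    ∃ D, I.dflt D ∧ ∀ E, reductDef I E → ∀ K : Interp At, K.sat (conjAtoms E) → K.sat D := by
  classical
  let f : List At → Set At := fun E => {p | p ∈ E}
  have hfin : (f '' {E | reductDef I E}).Finite := Set.toFinite _
  obtain ⟨A, hA, hAfin, hAe⟩ := Set.Finite.exists_subset_finite_image_eq hfin subset_rfl
  obtain ⟨D, hD, hD'⟩ := h.exists_disj hI (hAfin.toFinset.toList.map conjAtoms) (by
    simp only [List.mem_map, Finset.mem_toList, Set.Finite.mem_toFinset]
    rintro _ ⟨E, hE, rfl⟩
    exact hA hE)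
  refine ⟨D, hD, fun E hE K hK => (hD' K).2 ?_⟩
  obtain ⟨E', hE', hEE⟩ : f E ∈ f '' A := hAe ▸ Set.mem_image_of_mem f hE
  refine ⟨conjAtoms E', by simpa using ⟨E', hE', rfl⟩, ?_⟩
  rw [sat_conjAtoms] at hK ⊢
  exact fun p hp => hK p ((Set.ext_iff.1 hEE p).1 hp)

end Closed

/-! ### Minimal models of a static expansion -/

section Expansion

variable {At : Type} {P : Set (Clause At)} {Pbar : Set (Fml At)}

theorem IsStaticExpansion.cnClosed {T : Set (Fml At)} (h : IsStaticExpansion T Pbar) :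
    CnClosed (T ∪ {G | ∃ F : Fml At, MinEntails Pbar (Fml.neg F) ∧ G = Fml.not F}) Pbar := by
  have := cnClosed_cnNot
    (T ∪ {G | ∃ F : Fml At, MinEntails Pbar (Fml.neg F) ∧ G = Fml.not F})
  rwa [← h] at this

theorem IsStaticExpansion.satProg (h : IsStaticExpansion (Clause.toFml '' P) Pbar)
    {I : Interp At} (hI : I.satTheory Pbar) : satProg I.obj (reductDef I) P :=
  (satTheory_iff_satProg I (h.cnClosed.not_dflt_tru hI) P).1
    fun F hF => hI F (h.cnClosed.1 (Or.inl hF))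

theorem IsStaticExpansion.isMinModelProg_of_isMinModel
    (h : IsStaticExpansion (Clause.toFml '' P) Pbar)
    {J : Interp At} (hJ : IsMinModel Pbar J) : IsMinModelProg P J.obj (reductDef J) := by
  refine ⟨h.satProg hJ.1, fun Io hIo hlt => ?_⟩
  refine hJ.2 ⟨Io, J.dflt⟩ ?_ ⟨rfl, hlt⟩
  have hJ' := hJ.1
  rw [h] at hJ' ⊢
  refine satTheory_cnNot_of_dflt_eq_s13 hJ' rfl ?_
  rintro F (hF | hF)
  · have htru : ¬ J.dflt Fml.tru := h.cnClosed.not_dflt_tru hJ.1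
    exact (satTheory_iff_satProg ⟨Io, J.dflt⟩ htru P).2 hIo F hF
  · have hF' := hJ.1 F (h.cnClosed.1 (Or.inr hF))
    obtain ⟨F, -, rfl⟩ := hF
    exact hF'

/-- If `not F` holds and `not G` fails in a model of a static expansion, then some minimal model
of the expansion satisfies `G` and falsifies `F`. -/
theorem IsStaticExpansion.exists_minModel {T : Set (Fml At)} (h : IsStaticExpansion T Pbar)
    {I : Interp At} (hI : I.satTheory Pbar) {F G : Fml At} (hF : I.dflt F) (hG : ¬ I.dflt G) :
    ∃ J, IsMinModel Pbar J ∧ J.sat G ∧ ¬ J.sat F := by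
  by_contra hcon
  have hc := h.cnClosed
  have h1 : I.dflt (Fml.conj G (Fml.neg F)) := 
    hI (Fml.not _) (hc.1 (Or.inr
      ⟨Fml.conj G (Fml.neg F), fun J hJ hs => hcon ⟨J, hJ, hs⟩, rfl⟩))
  have h2 := (hc.dflt_disj hI _ _).2 ⟨h1, hF⟩
  rw [hc.dflt_congr hI (G := Fml.disj G F) (by intro K; simp only [Interp.sat]; tauto)] at h2
  exact hG ((hc.dflt_disj hI _ _).1 h2).1

/-- The induction step: `Ψ_P ∘ Φ_P` preserves the property of containing the default parts of all
models of the static expansion. -/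
theorem IsStaticExpansion.reductDef_mem_lamOp [Finite At]
    (h : IsStaticExpansion (Clause.toFml '' P) Pbar) {D : Set (DefVal At)}
    (hD : ∀ J : Interp At, J.satTheory Pbar → reductDef J ∈ D)
    {I : Interp At} (hI : I.satTheory Pbar) : reductDef I ∈ LamOp P D := by
  have hc := h.cnClosed
  obtain ⟨F, hF, hFE⟩ := hc.exists_disj_conjAtoms hI
  have hex : ∀ E, ¬ reductDef I E → ∃ J, IsMinModel Pbar J ∧ J.sat (conjAtoms E) ∧
      ∀ E', reductDef I E' → ¬ J.sat (conjAtoms E') := by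
    intro E hE
    obtain ⟨J, hJ, hJE, hJF⟩ := h.exists_minModel hI hF hE
    exact ⟨J, hJ, hJE, fun E' hE' hs => hJF (hFE E' hE' J hs)⟩
  have hnil : ¬ reductDef I [] := hc.not_dflt_tru hI
  refine ⟨hnil, ⟨{Io | ∃ J, IsMinModel Pbar J ∧ J.obj = Io ∧
      ∀ E', reductDef I E' → ¬ J.sat (conjAtoms E')}, ?_, ?_, ?_⟩, ⟨I.obj, h.satProg hI⟩⟩
  · rintro _ ⟨J, hJ, rfl, -⟩
    exact ⟨reductDef J, hD J hJ.1, h.isMinModelProg_of_isMinModel hJ⟩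
  · obtain ⟨J, hJ, -, hJ'⟩ := hex [] hnil
    exact ⟨J.obj, J, hJ, rfl, hJ'⟩
  · intro E
    constructor
    · rintro hE _ ⟨J, -, rfl, hJ'⟩
      simpa [sat_conjAtoms] using hJ' E hE
    · intro hall
      by_contra hE
      obtain ⟨J, hJ, hJE, hJ'⟩ := hex E hE
      obtain ⟨p, hp, hnp⟩ := hall _ ⟨J, hJ, rfl, hJ'⟩
      exact hnp ((sat_conjAtoms J E).1 hJE p hp)

end Expansion

/-- Let `P` be a finite super logic program with least static expansion `Pbar`,
`I` a full model of `Pbar`, and `I_obj ∪ I_def` its reduct.  Then `I_def` belongs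
to `N_P`, the fixed point of the iteration of `Λ_P` starting from `Def`. -/
theorem reductDef_mem_fixedPoint {At : Type} [Finite At]
    (P : Set (Clause At)) (hPfin : P.Finite)
    (Pbar : Set (Fml At)) (hbar : IsLeastStaticExpansion (Clause.toFml '' P) Pbar)
    (I : Interp At) (hI : I.satTheory Pbar)
    (k : ℕ) (hfix : (LamOp P)^[k + 1] (DefSet At) = (LamOp P)^[k] (DefSet At)) :
    reductDef I ∈ (LamOp P)^[k] (DefSet At) := by
  clear hfix
  induction k generalizing I with
  | zero => exact hbar.1.cnClosed.not_dflt_tru hI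
  | succ n ih =>
    rw [Function.iterate_succ_apply']
    exact hbar.1.reductDef_mem_lamOp ih hI
end
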